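/- arXiv:1512.05292 — 4 statements merged into one kernel-verified Lean document; each statement's English description precedes it below -/
import Mathlib

section
/- Let N ≥ 2. The matrix B = S_N * T_N is diagonalizable over ℝ with real eigenvalues: there exist an invertible real N×N matrix Q and a vector d ∈ ℝ^N such that S_N * T_N = Q * diagonal(d) * Q⁻¹. -/
open Matrix

/-- The `N × N` tridiagonal matrix with `2` on the diagonal and `-1` on the
sub- and superdiagonals. -/
noncomputable def Tmat (N : ℕ) : Matrix (Fin N) (Fin N) ℝ :=
  Matrix.of fun i j =>
    if i = j then 2
    else if i.val + 1 = j.val ∨ j.val + 1 = i.val then -1 else 0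

/-- The `N × N` matrix equal to `Tmat N` except that the `(1,1)` and `(N,N)` entries
are `1` instead of `2`. -/
noncomputable def Smat (N : ℕ) : Matrix (Fin N) (Fin N) ℝ :=
  Matrix.of fun i j =>
    if i = j then (if i.val = 0 ∨ i.val = N - 1 then 1 else 2)
    else if i.val + 1 = j.val ∨ j.val + 1 = i.val then -1 else 0

/-!
A positive definite `P` factors as `Cᴴ * C` with `C` invertible. For Hermitian `A`, the product
`A * P` is therefore similar, through `C`, to the Hermitian matrix `C * A * Cᴴ`, and the spectral
theorem applies. Here `S_N` is symmetric, and `T_N = Dᵀ * D` is positive definite because the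
difference operator `D` with zero boundary values is inverted on the left by partial summation.
-/

section RealDiagonalizable

variable {𝕜 n : Type*} [RCLike 𝕜] [Fintype n] [DecidableEq n] {A P : Matrix n n 𝕜}

/-- Diagonalizability over `𝕜` with real eigenvalues. The eigenvector matrix `Q` has entries in `𝕜`,
whereas the eigenvalues `d` are real even when `𝕜 = ℂ`. -/
def IsRealDiagonalizable (A : Matrix n n 𝕜) : Prop :=
  ∃ (Q : Matrix n n 𝕜) (d : n → ℝ),
    IsUnit Q.det ∧ A = Q * diagonal (fun i => (d i : 𝕜)) * Q⁻¹

theorem isRealDiagonalizable_of_isHermitian (hA : A.IsHermitian) : IsRealDiagonalizable A := by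
  let U : Matrix n n 𝕜 := ↑hA.eigenvectorUnitary
  have hU : U * star U = 1 := Unitary.coe_mul_star_self _
  refine ⟨U, hA.eigenvalues, isUnit_det_of_right_inverse hU, ?_⟩
  rw [inv_eq_right_inv hU]
  exact hA.spectral_theorem

theorem IsRealDiagonalizable.of_conj (hP : IsUnit P.det)
    (h : IsRealDiagonalizable (P * A * P⁻¹)) : IsRealDiagonalizable A := by
  obtain ⟨Q, d, hQ, hPA⟩ := h
  refine ⟨P⁻¹ * Q, d, ?_, ?_⟩
  · rw [det_mul]
    exact (isUnit_nonsing_inv_det P hP).mul hQ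
  · calc
      A = P⁻¹ * (P * A * P⁻¹) * P := by
        simp only [Matrix.mul_assoc, nonsing_inv_mul_cancel_left P _ hP, nonsing_inv_mul P hP,
          Matrix.mul_one]
      _ = P⁻¹ * Q * diagonal (fun i => (d i : 𝕜)) * (P⁻¹ * Q)⁻¹ := by
        rw [hPA, Matrix.mul_inv_rev, nonsing_inv_nonsing_inv P hP]
        simp only [Matrix.mul_assoc]

open scoped ComplexOrder MatrixOrder Matrix.Norms.L2Operator in
theorem exists_isUnit_det_eq_conjTranspose_mul_self (hP : P.PosDef) :
    ∃ C : Matrix n n 𝕜, IsUnit C.det ∧ P = Cᴴ * C := by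
  obtain ⟨C, hC, hPC⟩ :=
    CStarAlgebra.isStrictlyPositive_iff_eq_star_mul_self.mp hP.isStrictlyPositive
  exact ⟨C, (isUnit_iff_isUnit_det C).mp hC, hPC⟩

open scoped ComplexOrder in
theorem isRealDiagonalizable_mul_of_isHermitian_of_posDef (hA : A.IsHermitian)
    (hP : P.PosDef) : IsRealDiagonalizable (A * P) := by
  obtain ⟨C, hC, rfl⟩ := exists_isUnit_det_eq_conjTranspose_mul_self hP
  have h_conj : C * (A * (Cᴴ * C)) * C⁻¹ = C * A * Cᴴ := by
    simp only [Matrix.mul_assoc, mul_nonsing_inv C hC, Matrix.mul_one]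
  refine .of_conj hC ?_
  rw [h_conj]
  exact isRealDiagonalizable_of_isHermitian (isHermitian_mul_mul_conjTranspose C hA)

end RealDiagonalizable

section Difference

variable (R : Type*) [Ring R] (n : ℕ)

/-- The difference operator `x ↦ (x₀, x₁ - x₀, …, xₙ₋₁ - xₙ₋₂, -xₙ₋₁)`, in which `x` is extended by
zero at both ends. -/
def differenceMatrix : Matrix (Fin (n + 1)) (Fin n) R :=
  of fun k i => (if k = i.castSucc then 1 else 0) - if k = i.succ then 1 else 0

/-- The partial summation operator `y ↦ (y₀, y₀ + y₁, …, y₀ + ⋯ + yₙ₋₁)`. The last entry `yₙ` is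
ignored. -/
def partialSumMatrix : Matrix (Fin n) (Fin (n + 1)) R :=
  of fun i k => if k ≤ i.castSucc then 1 else 0

theorem partialSumMatrix_mul_differenceMatrix :
    partialSumMatrix R n * differenceMatrix R n = 1 := by
  ext i j
  have h_entry : (partialSumMatrix R n * differenceMatrix R n) i j =
      (if j ≤ i then 1 else 0) - if j < i then 1 else 0 := by
    simp [partialSumMatrix, differenceMatrix, mul_apply, mul_sub, Fin.succ_le_castSucc_iff]
  rw [h_entry, one_apply]
  grind

theorem differenceMatrix_mulVec_injective : Function.Injective (differenceMatrix R n).mulVec :=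
  Function.LeftInverse.injective (g := (partialSumMatrix R n).mulVec) fun x => by
    rw [mulVec_mulVec, partialSumMatrix_mul_differenceMatrix, one_mulVec]

end Difference

theorem Tmat_eq_conjTranspose_mul_self (N : ℕ) :
    Tmat N = (differenceMatrix ℝ N)ᴴ * differenceMatrix ℝ N := by
  ext i j
  have h_entry : ((differenceMatrix ℝ N)ᴴ * differenceMatrix ℝ N) i j =
      ((if j.castSucc = i.castSucc then 1 else 0) - if j.castSucc = i.succ then 1 else 0) -
        ((if j.succ = i.castSucc then 1 else 0) - if j.succ = i.succ then 1 else 0) := by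
    simp only [differenceMatrix, mul_apply, conjTranspose_apply, of_apply, star_trivial, mul_sub,
      mul_ite, mul_one, mul_zero, Finset.sum_sub_distrib, Finset.sum_ite_eq', Finset.mem_univ,
      if_true]
  rw [h_entry]
  simp only [Tmat, of_apply, Fin.ext_iff, Fin.val_castSucc, Fin.val_succ]
  grind

theorem posDef_Tmat (N : ℕ) : (Tmat N).PosDef := by
  rw [Tmat_eq_conjTranspose_mul_self]
  exact .conjTranspose_mul_self _ (differenceMatrix_mulVec_injective ℝ N)

theorem isHermitian_Smat (N : ℕ) : (Smat N).IsHermitian := by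
  refine .ext fun i j => ?_
  simp only [Smat, of_apply, star_trivial]
  grind

/-- `S_N * T_N` is diagonalizable over `ℝ` with real eigenvalues. -/
theorem SmatTmat_diagonalizable (N : ℕ) (hN : 2 ≤ N) :
    ∃ (Q : Matrix (Fin N) (Fin N) ℝ) (d : Fin N → ℝ),
      IsUnit Q.det ∧ Smat N * Tmat N = Q * Matrix.diagonal d * Q⁻¹ :=
  isRealDiagonalizable_mul_of_isHermitian_of_posDef (isHermitian_Smat N) (posDef_Tmat N)
end

section
/- Let N ≥ 2 and let e ∈ ℝ^N be the all-ones vector. Then 0 is a simple eigenvalue of S_N * T_N: the kernel of the linear map x ↦ (S_N * T_N) x is exactly the one-dimensional subspace of ℝ^N spanned by v₀ = T_N⁻¹ e. -/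
open Matrix

/-!
On the path with `N` vertices, `Smat N` is the graph Laplacian (the Neumann matrix), and `Tmat N`
is the Laplacian plus a nonnegative diagonal matrix supported at the two ends (the Dirichlet
matrix). The path is connected, so the kernel of the Laplacian consists of the constants, and the
diagonal term, being positive at an end, makes `Tmat N` positive definite. The kernel of
`Smat N * Tmat N` is then the preimage of the constants under the invertible `Tmat N`.
-/

theorem ker_mulVecLin_mul_eq_map_inv {m n R : Type*} [Fintype n] [DecidableEq n] [CommRing R]
    (A : Matrix m n R) {B : Matrix n n R} (hB : IsUnit B) :
    LinearMap.ker (A * B).mulVecLin = (LinearMap.ker A.mulVecLin).map B⁻¹.mulVecLin := by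
  have hdet : IsUnit B.det := (isUnit_iff_isUnit_det B).mp hB
  ext x
  simp only [Submodule.mem_map, LinearMap.mem_ker, mulVecLin_apply]
  constructor
  · intro hx
    exact ⟨B *ᵥ x, by rwa [mulVec_mulVec],
      by rw [mulVec_mulVec, nonsing_inv_mul B hdet, one_mulVec]⟩
  · rintro ⟨y, hy, rfl⟩
    rwa [mulVec_mulVec, mul_nonsing_inv_cancel_right _ _ hdet]

open scoped ComplexOrder in
theorem posDef_add_of_posSemidef {n 𝕜 : Type*} [Fintype n] [RCLike 𝕜] {A B : Matrix n n 𝕜}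
    (hA : A.PosSemidef) (hB : B.PosSemidef)
    (hker : ∀ x : n → 𝕜, A *ᵥ x = 0 → B *ᵥ x = 0 → x = 0) : (A + B).PosDef := by
  refine .of_dotProduct_mulVec_pos (hA.isHermitian.add hB.isHermitian) fun x hx => ?_
  have hAx : 0 ≤ star x ⬝ᵥ A *ᵥ x := hA.dotProduct_mulVec_nonneg x
  have hBx : 0 ≤ star x ⬝ᵥ B *ᵥ x := hB.dotProduct_mulVec_nonneg x
  rw [add_mulVec, dotProduct_add]
  refine (add_nonneg hAx hBx).lt_of_ne' fun hsum => hx ?_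
  obtain ⟨hA_zero, hB_zero⟩ := (add_eq_zero_iff_of_nonneg hAx hBx).mp hsum
  exact hker x ((hA.dotProduct_mulVec_zero_iff x).mp hA_zero)
    ((hB.dotProduct_mulVec_zero_iff x).mp hB_zero)

section Laplacian

variable {V : Type*} [Fintype V] [DecidableEq V] {G : SimpleGraph V} [DecidableRel G.Adj]

theorem ker_lapMatrix_mulVecLin_eq_span_one (hG : G.Preconnected) :
    LinearMap.ker (G.lapMatrix ℝ).mulVecLin = Submodule.span ℝ {fun _ => (1 : ℝ)} := by
  ext x
  rw [LinearMap.mem_ker, mulVecLin_apply, G.lapMatrix_mulVec_eq_zero_iff_forall_reachable,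
    Submodule.mem_span_singleton]
  constructor
  · intro hx
    cases isEmpty_or_nonempty V with
    | inl _ => exact ⟨0, Subsingleton.elim _ _⟩
    | inr hV =>
      obtain ⟨v⟩ := hV
      exact ⟨x v, funext fun w => by simpa using hx v w (hG v w)⟩
  · rintro ⟨a, rfl⟩ _ _ _
    rfl

theorem posDef_lapMatrix_add_diagonal {d : V → ℝ} (hd : 0 ≤ d)
    (hreach : ∀ u, ∃ v, G.Reachable u v ∧ d v ≠ 0) :
    (G.lapMatrix ℝ + diagonal d).PosDef := by
  refine posDef_add_of_posSemidef (G.posSemidef_lapMatrix ℝ) (.diagonal hd) fun x hLx hdx => ?_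
  funext u
  obtain ⟨v, huv, hdv⟩ := hreach u
  have hxv : d v * x v = 0 := by rw [← mulVec_diagonal, hdx, Pi.zero_apply]
  calc
    x u = x v := G.lapMatrix_mulVec_eq_zero_iff_forall_reachable.mp hLx u v huv
    _ = 0 := (mul_eq_zero.mp hxv).resolve_left hdv

end Laplacian

section PathGraph

open SimpleGraph

/-- The number of ends of the path on `Fin N` located at the vertex `i`, which is the number of
neighbors that `i` lacks to have degree `2`. Both ends are counted at the single vertex when
`N = 1`. -/
def endpointCount (N : ℕ) (i : Fin N) : ℕ :=
  (if i.val = 0 then 1 else 0) + (if i.val + 1 = N then 1 else 0)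

theorem degree_pathGraph_add_endpointCount {N : ℕ} (i : Fin N)
    [Fintype ((pathGraph N).neighborSet i)] :
    (pathGraph N).degree i + endpointCount N i = 2 := by
  have degree_eq (s : Finset (Fin N))
      (hs : ∀ j, j ∈ s ↔ i.val + 1 = j.val ∨ j.val + 1 = i.val) :
      (pathGraph N).degree i = s.card := by
    rw [← card_neighborFinset_eq_degree]
    congr 1
    ext j
    rw [mem_neighborFinset, pathGraph_adj, hs]
  unfold endpointCount
  split_ifs
  · rw [degree_eq ∅ fun j => by grind, Finset.card_empty]
  · rw [degree_eq {⟨i.val + 1, by omega⟩} fun j => by grind, Finset.card_singleton]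
  · rw [degree_eq {⟨i.val - 1, by omega⟩} fun j => by grind, Finset.card_singleton]
  · rw [degree_eq {⟨i.val - 1, by omega⟩, ⟨i.val + 1, by omega⟩} fun j => by grind,
      Finset.card_pair (by grind)]

variable {N : ℕ} [DecidableRel (pathGraph N).Adj]

theorem lapMatrix_pathGraph_apply (i j : Fin N) :
    (pathGraph N).lapMatrix ℝ i j =
      if i = j then 2 - (endpointCount N i : ℝ)
      else if i.val + 1 = j.val ∨ j.val + 1 = i.val then -1 else 0 := by
  have hdegree : ((pathGraph N).degree i : ℝ) = 2 - endpointCount N i :=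
    eq_sub_of_add_eq (mod_cast degree_pathGraph_add_endpointCount i)
  rw [lapMatrix, degMatrix, Matrix.sub_apply, diagonal_apply, adjMatrix_apply, hdegree]
  simp only [pathGraph_adj]
  grind

theorem Smat_eq_lapMatrix_pathGraph (hN : 2 ≤ N) : Smat N = (pathGraph N).lapMatrix ℝ := by
  ext i j
  rw [lapMatrix_pathGraph_apply]
  simp only [Smat, endpointCount, of_apply, Nat.cast_add, Nat.cast_ite, Nat.cast_one, Nat.cast_zero]
  grind

theorem Tmat_eq_lapMatrix_pathGraph_add_diagonal :
    Tmat N = (pathGraph N).lapMatrix ℝ + diagonal fun i => (endpointCount N i : ℝ) := by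
  ext i j
  rw [Matrix.add_apply, lapMatrix_pathGraph_apply, diagonal_apply]
  simp only [Tmat, of_apply]
  grind

end PathGraph

theorem ker_Smat_mulVecLin {N : ℕ} (hN : 2 ≤ N) :
    LinearMap.ker (Smat N).mulVecLin = Submodule.span ℝ {fun _ => (1 : ℝ)} := by
  classical
  rw [Smat_eq_lapMatrix_pathGraph hN,
    ker_lapMatrix_mulVecLin_eq_span_one (SimpleGraph.pathGraph_preconnected N)]

/-- `0` is a simple eigenvalue of `S_N * T_N`: the kernel of `x ↦ (S_N T_N) x` is
exactly the span of `v₀ = T_N⁻¹ e`. -/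
theorem SmatTmat_ker_simple (N : ℕ) (hN : 2 ≤ N) :
    LinearMap.ker (Smat N * Tmat N).mulVecLin =
      Submodule.span ℝ {(Tmat N)⁻¹.mulVec (fun _ => (1 : ℝ))} := by
  rw [ker_mulVecLin_mul_eq_map_inv _ (posDef_Tmat N).isUnit, ker_Smat_mulVecLin hN,
    Submodule.map_span, Set.image_singleton, mulVecLin_apply]
end

section
/- Let N ≥ 2. Define the (N+2)×N matrix Ŝ_N whose first row is (2, −1, 0, …, 0), whose last row is (0, …, 0, −1, 2), and whose middle N rows form T_N; and define the N×(N+2) matrix T̂_N whose i-th row (1 ≤ i ≤ N) has entries −1, 2, −1 in columns i, i+1, i+2 (columns indexed 1 through N+2) and 0 elsewhere. Let E_N be the N×N matrix with (1,1) and (N,N) entries equal to 1 and all other entries 0. Then T̂_N * Ŝ_N = T_N² − E_N * T_N = S_N * T_N. -/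
open Matrix

/-- The `(N+2) × N` matrix `Ŝ_N`: first row `(2, -1, 0, …, 0)`, last row
`(0, …, 0, -1, 2)`, and the middle `N` rows form `T_N`. -/
noncomputable def Shat (N : ℕ) : Matrix (Fin (N + 2)) (Fin N) ℝ :=
  Matrix.of fun i j =>
    if i.val = 0 then (if j.val = 0 then 2 else if j.val = 1 then -1 else 0)
    else if i.val = N + 1 then
      (if j.val = N - 1 then 2 else if j.val + 1 = N - 1 then -1 else 0)
    else
      (if i.val = j.val + 1 then 2
        else if i.val = j.val + 2 ∨ i.val = j.val then -1 else 0)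

/-- The `N × (N+2)` matrix `T̂_N` whose `i`-th row has entries `-1, 2, -1` in
columns `i, i+1, i+2`. -/
noncomputable def That (N : ℕ) : Matrix (Fin N) (Fin (N + 2)) ℝ :=
  Matrix.of fun i j =>
    if j.val = i.val then -1
    else if j.val = i.val + 1 then 2
    else if j.val = i.val + 2 then -1 else 0

/-- The `N × N` matrix with `(1,1)` and `(N,N)` entries `1` and all other entries `0`. -/
noncomputable def Emat (N : ℕ) : Matrix (Fin N) (Fin N) ℝ :=
  Matrix.of fun i j =>
    if i = j ∧ (i.val = 0 ∨ i.val = N - 1) then 1 else 0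

/-! Keeping only the middle `N` columns of `T̂_N` and the middle `N` rows of `Ŝ_N` leaves two copies
of `T_N`, which contribute `T_N²`. The outer columns of `T̂_N` are `-e₁` and `-e_N`, and the outer
rows of `Ŝ_N` repeat the first and last rows of `T_N`, so what remains is
`-(e₁ e₁ᵀ + e_N e_Nᵀ) T_N = -E_N T_N`. -/

theorem mul_eq_submatrix_mul_add_vecMulVec {l m R : Type*} [NonUnitalNonAssocSemiring R] {n : ℕ}
    (A : Matrix l (Fin (n + 2)) R) (B : Matrix (Fin (n + 2)) m R) :
    A * B = A.submatrix id (fun k : Fin n => k.castSucc.succ) *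
          B.submatrix (fun k : Fin n => k.castSucc.succ) id +
        (vecMulVec (A.col 0) (B.row 0) +
          vecMulVec (A.col (Fin.last (n + 1))) (B.row (Fin.last (n + 1)))) := by
  ext i j
  simp only [mul_apply, Matrix.add_apply, submatrix_apply, vecMulVec_apply, col_apply, row_apply,
    id_eq, Fin.sum_univ_succ (n := n + 1), Fin.sum_univ_castSucc (n := n), Fin.succ_last]
  exact add_left_comm _ _ _

theorem That_submatrix_castSucc_succ (N : ℕ) :
    (That N).submatrix id (fun k : Fin N => k.castSucc.succ) = Tmat N := by
  ext i j
  simp only [That, Tmat, submatrix_apply, of_apply, id_eq, Fin.val_succ, Fin.val_castSucc,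
    Fin.ext_iff]
  grind

theorem Shat_submatrix_castSucc_succ (N : ℕ) :
    (Shat N).submatrix (fun k : Fin N => k.castSucc.succ) id = Tmat N := by
  ext i j
  simp only [Shat, Tmat, submatrix_apply, of_apply, id_eq, Fin.val_succ, Fin.val_castSucc,
    Fin.ext_iff]
  grind

theorem That_col_zero (n : ℕ) : (That (n + 1)).col 0 = -Pi.single 0 1 := by
  ext i
  simp only [That, col_apply, of_apply, Pi.neg_apply, Pi.single_apply, Fin.ext_iff, Fin.val_zero]
  grind

theorem That_col_last (n : ℕ) :
    (That (n + 1)).col (Fin.last (n + 2)) = -Pi.single (Fin.last n) 1 := by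
  ext i
  simp only [That, col_apply, of_apply, Pi.neg_apply, Pi.single_apply, Fin.ext_iff, Fin.val_last]
  grind

theorem Shat_row_zero (n : ℕ) : (Shat (n + 1)).row 0 = (Tmat (n + 1)).row 0 := by
  ext j
  simp only [Shat, Tmat, row_apply, of_apply, Fin.ext_iff, Fin.val_zero]
  grind

theorem Shat_row_last (n : ℕ) :
    (Shat (n + 1)).row (Fin.last (n + 2)) = (Tmat (n + 1)).row (Fin.last n) := by
  ext j
  simp only [Shat, Tmat, row_apply, of_apply, Fin.ext_iff, Fin.val_last]
  grind

theorem Emat_eq_vecMulVec_add_vecMulVec (n : ℕ) :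
    Emat (n + 2) = vecMulVec (Pi.single 0 1) (Pi.single 0 1) +
      vecMulVec (Pi.single (Fin.last (n + 1)) 1) (Pi.single (Fin.last (n + 1)) 1) := by
  ext i j
  simp only [Emat, Matrix.add_apply, vecMulVec_apply, Pi.single_apply, of_apply, Fin.ext_iff,
    Fin.val_zero, Fin.val_last]
  grind

theorem Emat_mul {m : Type*} (n : ℕ) (A : Matrix (Fin (n + 2)) m ℝ) :
    Emat (n + 2) * A = vecMulVec (Pi.single 0 1) (A.row 0) +
      vecMulVec (Pi.single (Fin.last (n + 1)) 1) (A.row (Fin.last (n + 1))) := by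
  rw [Emat_eq_vecMulVec_add_vecMulVec, Matrix.add_mul, vecMulVec_mul, vecMulVec_mul,
    single_one_vecMul, single_one_vecMul]

theorem Smat_eq_Tmat_sub_Emat (N : ℕ) : Smat N = Tmat N - Emat N := by
  ext i j
  simp only [Smat, Tmat, Emat, of_apply, Matrix.sub_apply]
  grind

theorem That_mul_Shat_eq_sq_sub (n : ℕ) :
    That (n + 2) * Shat (n + 2) = Tmat (n + 2) ^ 2 - Emat (n + 2) * Tmat (n + 2) := by
  let T := Tmat (n + 2)
  calc
    That (n + 2) * Shat (n + 2)
      = T * T + (vecMulVec (-Pi.single 0 1) (T.row 0) +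
          vecMulVec (-Pi.single (Fin.last (n + 1)) 1) (T.row (Fin.last (n + 1)))) := by
        rw [mul_eq_submatrix_mul_add_vecMulVec, That_submatrix_castSucc_succ,
          Shat_submatrix_castSucc_succ, That_col_zero, That_col_last, Shat_row_zero, Shat_row_last]
    _ = T ^ 2 - Emat (n + 2) * T := by
        rw [neg_vecMulVec, neg_vecMulVec, ← neg_add, ← Emat_mul, ← sub_eq_add_neg, sq]

/-- Identity (21): `T̂_N Ŝ_N = T_N² - E_N T_N = S_N T_N`. -/
theorem That_mul_Shat (N : ℕ) (hN : 2 ≤ N) :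
    That N * Shat N = Tmat N ^ 2 - Emat N * Tmat N ∧
      That N * Shat N = Smat N * Tmat N := by
  obtain ⟨n, rfl⟩ := Nat.exists_eq_add_of_le' hN
  refine ⟨That_mul_Shat_eq_sq_sub n, ?_⟩
  rw [That_mul_Shat_eq_sq_sub, Smat_eq_Tmat_sub_Emat, sub_mul, sq]
end

section
/- Let λ₁, λ₂, λ_n be real numbers with 0 < λ₁ < λ₂ < λ_n. Then (λ₁⁻¹ − λ₂⁻¹)/(λ₂⁻¹ − λ_n⁻¹) > (λ₂ − λ₁)/λ₁. -/
theorem inv_sub_inv_div_inv_sub_inv {K : Type*} [Field K] {a b c : K}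
    (ha : a ≠ 0) (hb : b ≠ 0) (hc : c ≠ 0) :
    (a⁻¹ - b⁻¹) / (b⁻¹ - c⁻¹) = (b - a) / a * (c / (c - b)) := by
  rw [inv_sub_inv ha hb, inv_sub_inv hb hc]
  field_simp

theorem inverse_relative_gap_general {K : Type*} [Field K] [LinearOrder K]
    [IsStrictOrderedRing K] {a b c : K} (ha : 0 < a) (hab : a < b) (hbc : b < c) :
    (b - a) / a < (a⁻¹ - b⁻¹) / (b⁻¹ - c⁻¹) := by
  have hb : 0 < b := ha.trans hab
  have hc : 0 < c := hb.trans hbc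
  have gap_pos : 0 < (b - a) / a := div_pos (sub_pos.mpr hab) ha
  have one_lt_factor : 1 < c / (c - b) :=
    (one_lt_div (sub_pos.mpr hbc)).mpr (sub_lt_self c hb)
  calc (b - a) / a
      < (b - a) / a * (c / (c - b)) := lt_mul_of_one_lt_right gap_pos one_lt_factor
    _ = (a⁻¹ - b⁻¹) / (b⁻¹ - c⁻¹) :=
        (inv_sub_inv_div_inv_sub_inv ha.ne' hb.ne' hc.ne').symm

/-- The inverse has a better relative spectral gap:
`(λ₁⁻¹ − λ₂⁻¹)/(λ₂⁻¹ − λ_n⁻¹) > (λ₂ − λ₁)/λ₁` for `0 < λ₁ < λ₂ < λ_n`. -/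
theorem inverse_relative_gap (l1 l2 ln : ℝ) (h1 : 0 < l1) (h12 : l1 < l2) (h2n : l2 < ln) :
    (l2 - l1) / l1 < (l1⁻¹ - l2⁻¹) / (l2⁻¹ - ln⁻¹) :=
  inverse_relative_gap_general h1 h12 h2n
end
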